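/- Let s be an N-crossing one-step sequence over {1,…,m}. Then the strictly increasing sequence 1, 2, …, m belongs to squeeze^{N²}(s), i.e., after at most N² applications of the squeeze operation all z-motions of s can be removed, yielding a monotone one-way sequence. -/

import Mathlib

def OneStep (a : ℕ → ℕ) (n m : ℕ) : Prop :=
  1 ≤ n ∧ a 1 = 1 ∧ a n = m ∧
  (∀ i, 1 ≤ i → i ≤ n → 1 ≤ a i ∧ a i ≤ m) ∧
  (∀ i, 1 ≤ i → i < n → a (i + 1) = a i + 1 ∨ a i = a (i + 1) + 1)

def KCrossing (a : ℕ → ℕ) (n K : ℕ) : Prop :=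
  ∀ x, ((Finset.Icc 1 n).filter fun i => a i = x).card ≤ K

def IsReversal (a : ℕ → ℕ) (n r : ℕ) : Prop :=
  1 < r ∧ r < n ∧ a (r + 1) = a (r - 1)

def ConsecRev (a : ℕ → ℕ) (n r r' : ℕ) : Prop :=
  IsReversal a n r ∧ IsReversal a n r' ∧ r < r' ∧
  ∀ s, r < s → s < r' → ¬ IsReversal a n s

def ZInstance (a : ℕ → ℕ) (n e r r' f : ℕ) : Prop :=
  ConsecRev a n r r' ∧ 1 ≤ e ∧ e < r ∧ r' < f ∧ f ≤ n ∧
  a e = a r' ∧ a f = a r ∧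
  (∀ s, e < s → s < r → ¬ IsReversal a n s) ∧
  (∀ s, r' < s → s < f → ¬ IsReversal a n s)

/-- The 1-based indexing function of a list of naturals. -/
def seqAt (s : List ℕ) : ℕ → ℕ := fun i => s.getD (i - 1) 0

/-- A z-motion of the sequence `s`, as a quadruple `(e, r, r', f)`:
span `e..f`, reversals `r < r'`. -/
def QuadZ (s : List ℕ) (q : ℕ × ℕ × ℕ × ℕ) : Prop :=
  ZInstance (seqAt s) s.length q.1 q.2.1 q.2.2.1 q.2.2.2

/-- Removing the z-motion spanning indices `e..f` with first reversal `r`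
(1-based) yields `a₁,…,a_r, a_{f+1},…,a_n`. -/
def removeSpan (s : List ℕ) (r f : ℕ) : List ℕ := s.take r ++ s.drop f

/-- One squeeze step: remove some pairwise (index-)disjoint z-motions of `s`,
listed from right to left. -/
def SqueezeStep (s s' : List ℕ) : Prop :=
  ∃ L : List (ℕ × ℕ × ℕ × ℕ),
    (∀ q ∈ L, QuadZ s q) ∧
    L.Pairwise (fun q q' => q'.2.2.2 < q.1) ∧
    s' = L.foldl (fun t q => removeSpan t q.2.1 q.2.2.2) s

/-- `k`-fold iteration of the squeeze operation. -/
def SqueezeIter : ℕ → List ℕ → List ℕ → Prop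
  | 0, s, s' => s = s'
  | k + 1, s, s' => ∃ t, SqueezeStep s t ∧ SqueezeIter k t s'



/-! Turning-point lists. -/

def Nest (a b c d : ℕ) : Prop := (a ≤ c ∧ c < b ∧ b ≤ d) ∨ (d ≤ b ∧ b < c ∧ c ≤ a)

def InR (p q x : ℕ) : Prop := (p ≤ x ∧ x ≤ q) ∨ (q ≤ x ∧ x ≤ p)

inductive ZP : List ℕ → ℕ → ℕ → Prop
  | here (a p q d : ℕ) (l : List ℕ) : Nest a p q d → ZP (a :: p :: q :: d :: l) p q
  | there (a : ℕ) (l : List ℕ) (p q : ℕ) : ZP l p q → ZP (a :: l) p q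

inductive ZZ : List ℕ → Prop
  | one (a : ℕ) : ZZ [a]
  | two (a b : ℕ) : a ≠ b → ZZ [a, b]
  | cons (a b c : ℕ) (l : List ℕ) : ((a < b ∧ c < b) ∨ (b < a ∧ b < c)) → ZZ (b :: c :: l) →
      ZZ (a :: b :: c :: l)

inductive RR : ℕ → Option ℕ → List ℕ → List ℕ → List (ℕ × ℕ) → Prop
  | nil (a : ℕ) (y : Option ℕ) : RR a y [] [] []
  | keep (a : ℕ) (y : Option ℕ) (b : ℕ) (l o : List ℕ) (X : List (ℕ × ℕ)) :
      (∀ c d l', l = c :: d :: l' → Nest a b c d →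
        ∃ z, y = some z ∧ ((a < b ∧ c ≤ z) ∨ (b < a ∧ z ≤ c))) →
      RR b (if y = some b then some b else none) l o X → RR a y (b :: l) (b :: o) X
  | del (a : ℕ) (y : Option ℕ) (b c d : ℕ) (l o : List ℕ) (X : List (ℕ × ℕ)) :
      Nest a b c d → (∀ z, y = some z → (a < b ∧ z < c) ∨ (b < a ∧ c < z)) →
      RR c (some b) (d :: l) o X → RR a y (b :: c :: d :: l) o ((b, c) :: X)

theorem RR_exists : ∀ (n : ℕ) (l : List ℕ), l.length ≤ n → ∀ a y, ∃ o X, RR a y l o X := by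
  intro n
  induction n with
  | zero =>
    intro l hl a y
    have : l = [] := List.length_eq_zero_iff.mp (by omega)
    subst this
    exact ⟨_, _, RR.nil a y⟩
  | succ n ih =>
    intro l hl a y
    rcases l with _ | ⟨b, l⟩
    · exact ⟨_, _, RR.nil a y⟩
    · by_cases h : ∃ c d l', l = c :: d :: l' ∧ Nest a b c d ∧
        (∀ z, y = some z → (a < b ∧ z < c) ∨ (b < a ∧ c < z))
      · obtain ⟨c, d, l', rfl, h1, h2⟩ := h
        obtain ⟨o, X, hR⟩ := ih (d :: l') (by simp at hl ⊢; omega) c (some b)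
        exact ⟨_, _, RR.del a y b c d l' o X h1 h2 hR⟩
      · obtain ⟨o, X, hR⟩ := ih l (by simp at hl ⊢; omega) b (if y = some b then some b else none)
        refine ⟨_, _, RR.keep a y b l o X ?_ hR⟩
        intro c d l' hl' hn
        by_contra hc
        apply h
        refine ⟨c, d, l', hl', hn, ?_⟩
        intro z hz
        by_contra h3
        apply hc
        refine ⟨z, hz, ?_⟩
        unfold Nest at hn
        omega

theorem RR_head {a y l o X} (h : RR a y l o X) : ∀ b l', l = b :: l' →
    ∃ b' o', o = b' :: o' ∧ (a < b → b ≤ b') ∧ (b < a → b' ≤ b) := by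
  induction h with
  | nil a y => intro b l' h; simp at h
  | keep a y b l o X h1 h2 ih =>
    intro b1 l1 h
    simp at h
    obtain ⟨rfl, rfl⟩ := h
    exact ⟨b, o, rfl, fun _ => le_rfl, fun _ => le_rfl⟩
  | del a y b c d l o X h1 h2 h3 ih =>
    intro b1 l1 h
    simp at h
    obtain ⟨rfl, rfl⟩ := h
    obtain ⟨b', o', rfl, h5, h6⟩ := ih d l rfl
    refine ⟨b', o', rfl, ?_, ?_⟩ <;> unfold Nest at h1 <;> omega

theorem RR_nil {a y o X} (h : RR a y [] o X) : o = [] := by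
  cases h; rfl

theorem ZZ_tail {a b : ℕ} {l : List ℕ} (h : ZZ (a :: b :: l)) : ZZ (b :: l) := by
  cases h with
  | two _ _ h => exact ZZ.one _
  | cons _ _ c l h1 h2 => exact h2

theorem ZZ_ne {a b : ℕ} {l : List ℕ} (h : ZZ (a :: b :: l)) : a ≠ b := by
  cases h with
  | two _ _ h => exact h
  | cons _ _ c l h1 h2 => omega

theorem ZZ_turn {a b c : ℕ} {l : List ℕ} (h : ZZ (a :: b :: c :: l)) :
    (a < b ∧ c < b) ∨ (b < a ∧ b < c) := by
  cases h with
  | cons _ _ c l h1 h2 => exact h1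

theorem RR_ZZ {a y l o X} (h : RR a y l o X) : ZZ (a :: l) → ZZ (a :: o) := by
  induction h with
  | nil a y => exact id
  | keep a y b l o X h1 h2 ih =>
    intro hz
    have h3 := ih (ZZ_tail hz)
    rcases l with _ | ⟨c, l⟩
    · rw [RR_nil h2]; exact hz
    · obtain ⟨c', o', rfl, h5, h6⟩ := RR_head h2 c l rfl
      refine ZZ.cons _ _ _ _ ?_ h3
      have := ZZ_turn hz
      omega
  | del a y b c d l o X h1 h2 h3 ih =>
    intro hz
    have h4 := ih (ZZ_tail (ZZ_tail hz))
    obtain ⟨d', o', rfl, h5, h6⟩ := RR_head h3 d l rfl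
    unfold Nest at h1
    cases h4 with
    | two _ _ h => apply ZZ.two; omega
    | cons _ _ e l h7 h8 => exact ZZ.cons _ _ _ _ (by omega) h8

theorem RR_last {a y l o X} (h : RR a y l o X) :
    (a :: o).getLast (by simp) = (a :: l).getLast (by simp) := by
  induction h with
  | nil a y => rfl
  | keep a y b l o X h1 h2 ih => simpa using ih
  | del a y b c d l o X h1 h2 h3 ih =>
    obtain ⟨d', o', rfl, h5, h6⟩ := RR_head h3 d l rfl
    simpa using ih

theorem RR_mem {a y l o X} (h : RR a y l o X) : ∀ x ∈ o, x ∈ l := by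
  induction h with
  | nil a y => simp
  | keep a y b l o X h1 h2 ih =>
    intro x hx
    simp at hx ⊢
    rcases hx with hx | hx
    · exact Or.inl hx
    · exact Or.inr (ih x hx)
  | del a y b c d l o X h1 h2 h3 ih =>
    intro x hx
    have := ih x hx
    simp at this ⊢
    tauto

theorem RR_X {a y l o X} (h : RR a y l o X) : ∀ q ∈ X, ZP (a :: l) q.1 q.2 := by
  induction h with
  | nil a y => simp
  | keep a y b l o X h1 h2 ih =>
    intro q hq
    exact ZP.there _ _ _ _ (ih q hq)
  | del a y b c d l o X h1 h2 h3 ih =>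
    intro q hq
    rcases List.mem_cons.mp hq with rfl | hq
    · exact ZP.here _ _ _ _ _ h1
    · exact ZP.there _ _ _ _ (ZP.there _ _ _ _ (ih q hq))

def hit (x a b : ℕ) : ℕ := if (a ≤ x ∧ x < b) ∨ (b < x ∧ x ≤ a) then 1 else 0

def cnt (x : ℕ) : List ℕ → ℕ
  | [] => 0
  | [a] => if x = a then 1 else 0
  | a :: b :: l => hit x a b + cnt x (b :: l)

theorem cnt_del (x a b c d : ℕ) (o : List ℕ) (h : Nest a b c d) :
    cnt x (a :: d :: o) ≤ cnt x (a :: b :: c :: d :: o) ∧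
    (InR b c x → cnt x (a :: d :: o) + 1 ≤ cnt x (a :: b :: c :: d :: o)) := by
  simp only [cnt, hit, InR]
  unfold Nest at h
  constructor
  · split_ifs <;> omega
  · intro h'
    split_ifs <;> omega

theorem RR_cnt {a y l o X} (h : RR a y l o X) (x : ℕ) : cnt x (a :: o) ≤ cnt x (a :: l) ∧
    ∀ q ∈ X, InR q.1 q.2 x → cnt x (a :: o) + 1 ≤ cnt x (a :: l) := by
  induction h with
  | nil a y => simp
  | keep a y b l o X h1 h2 ih =>
    simp only [cnt]
    refine ⟨by omega, fun q hq hx => ?_⟩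
    have := ih.2 q hq hx
    omega
  | del a y b c d l o X h1 h2 h3 ih =>
    obtain ⟨d', o', rfl, h5, h6⟩ := RR_head h3 d l rfl
    have hn : Nest a b c d' := by unfold Nest at h1 ⊢; omega
    have hc := cnt_del x a b c d' o' hn
    have e1 : cnt x (a :: b :: c :: d' :: o') = hit x a b + (hit x b c + cnt x (c :: d' :: o')) := rfl
    have e2 : cnt x (a :: b :: c :: d :: l) = hit x a b + (hit x b c + cnt x (c :: d :: l)) := rfl
    refine ⟨by omega, fun q hq hx => ?_⟩
    rcases List.mem_cons.mp hq with rfl | hq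
    · have := hc.2 hx
      omega
    · have := ih.2 q hq hx
      omega

theorem RR_pat {a y l o X} (h : RR a y l o X) : ∀ (Y : List (ℕ × ℕ)), (∀ q ∈ X, q ∈ Y) →
    ZZ (a :: l) →
    (∀ z, y = some z → ∃ q ∈ Y, ∀ x, InR a z x → InR q.1 q.2 x) →
    ∀ p q, ZP (a :: o) p q →
    (∃ u ∈ Y, ∀ x, InR u.1 u.2 x → InR p q x) ∨
    (ZP (a :: l) p q ∧ ∃ u ∈ Y, InR u.1 u.2 q) := by
  induction h with
  | nil a y =>
    intro Y hX hz hy p q hp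
    cases hp with
    | there _ _ _ _ h => cases h
  | keep a y b l o X h1 h2 ih =>
    intro Y hX hz hy p q hp
    have hy' : ∀ z, (if y = some b then some b else none) = some z →
        ∃ q ∈ Y, ∀ x, InR b z x → InR q.1 q.2 x := by
      intro z hz'
      split_ifs at hz' with hb
      · simp at hz'
        subst hz'
        obtain ⟨u, hu, hu2⟩ := hy b hb
        refine ⟨u, hu, fun x hx => hu2 x ?_⟩
        unfold InR at hx ⊢; omega
    cases hp with
    | there _ _ _ _ h =>
      rcases ih Y hX (ZZ_tail hz) hy' p q h with h | ⟨h, h'⟩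
      · exact Or.inl h
      · exact Or.inr ⟨ZP.there _ _ _ _ h, h'⟩
    | here _ _ _ q1 o' hn =>
      cases h2 with
      | del _ _ c d e l' _ X' g1 g2 g3 =>
        left
        refine ⟨(c, d), hX _ (by simp), ?_⟩
        obtain ⟨e', o'', he, h5, h6⟩ := RR_head g3 e l' rfl
        simp at he
        obtain ⟨rfl, rfl⟩ := he
        intro x hx
        have t1 := ZZ_turn hz
        have t2 := ZZ_turn (ZZ_tail hz)
        unfold Nest at *
        unfold InR at *
        simp only at hx
        omega
      | keep _ _ _ l' _ X' g1 g2 =>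
        cases g2 with
        | del _ _ d e f l' _ X' k1 k2 k3 =>
          by_cases hnn : Nest a b q d
          · right
            refine ⟨ZP.here _ _ _ _ _ hnn, ?_⟩
            obtain ⟨z, hz1, hz2⟩ := h1 _ _ _ rfl hnn
            obtain ⟨u, hu, hu2⟩ := hy z hz1
            refine ⟨u, hu, hu2 q ?_⟩
            unfold Nest at hnn
            unfold InR
            omega
          · left
            refine ⟨(d, e), hX _ (by simp), ?_⟩
            intro x hx
            have t1 := ZZ_turn hz
            have t2 := ZZ_turn (ZZ_tail hz)
            unfold Nest at *
            unfold InR at *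
            simp only at hx
            omega
        | keep _ _ _ l' _ X' k1 k2 =>
          right
          refine ⟨ZP.here _ _ _ _ _ hn, ?_⟩
          obtain ⟨z, hz1, hz2⟩ := h1 _ _ _ rfl hn
          obtain ⟨u, hu, hu2⟩ := hy z hz1
          refine ⟨u, hu, hu2 q ?_⟩
          unfold Nest at hn
          unfold InR
          omega
  | del a y b c d l o X h1 h2 h3 ih =>
    intro Y hX hz hy p q hp
    have hbc : (b, c) ∈ Y := hX _ (by simp)
    have hy' : ∀ z, some b = some z → ∃ q ∈ Y, ∀ x, InR c z x → InR q.1 q.2 x := by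
      intro z hz'
      simp at hz'
      subst hz'
      refine ⟨_, hbc, fun x hx => ?_⟩
      unfold InR at *
      simp only
      omega
    have IH := ih Y (fun q hq => hX q (by simp [hq])) (ZZ_tail (ZZ_tail hz)) hy' p q
    have fin : ZP (c :: o) p q → (∃ u ∈ Y, ∀ x, InR u.1 u.2 x → InR p q x) ∨
      (ZP (a :: b :: c :: d :: l) p q ∧ ∃ u ∈ Y, InR u.1 u.2 q) := by
      intro h
      rcases IH h with h | ⟨h, h'⟩
      · exact Or.inl h
      · exact Or.inr ⟨ZP.there _ _ _ _ (ZP.there _ _ _ _ h), h'⟩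
    cases hp with
    | there _ _ _ _ h => exact fin (ZP.there _ _ _ _ h)
    | here _ _ _ q1 o' hn =>
      by_cases hnn : Nest c p q q1
      · exact fin (ZP.here _ _ _ _ _ hnn)
      · left
        refine ⟨_, hbc, ?_⟩
        obtain ⟨e', o'', he, h5, h6⟩ := RR_head h3 d l rfl
        simp at he
        obtain ⟨rfl, rfl⟩ := he
        intro x hx
        unfold Nest at *
        unfold InR at *
        simp only at hx
        omega

theorem noZP_last (l : List ℕ) : ∀ a b c, ZZ (a :: b :: c :: l) →
    (∀ p q, ¬ ZP (a :: b :: c :: l) p q) → InR a b c →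
    (b < c → b < (c :: l).getLast (by simp)) ∧ (c < b → (c :: l).getLast (by simp) < b) ∧
    InR b c ((c :: l).getLast (by simp)) := by
  induction l with
  | nil =>
    intro a b c hz hn hr
    simp [InR]
    omega
  | cons d l ih =>
    intro a b c hz hn hr
    have t1 := ZZ_turn hz
    have t2 := ZZ_turn (ZZ_tail hz)
    have hnn : ¬ Nest a b c d := fun h => hn _ _ (ZP.here _ _ _ _ _ h)
    have := ih b c d (ZZ_tail hz) (fun p q h => hn p q (ZP.there _ _ _ _ h))
      (by unfold InR Nest at *; omega)
    have e : (c :: d :: l).getLast (by simp) = (d :: l).getLast (by simp) := by simp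
    rw [e]
    unfold InR Nest at *
    omega

theorem noZP_final (m : ℕ) (l : List ℕ) (hz : ZZ (1 :: l)) (hb : ∀ x ∈ l, 1 ≤ x ∧ x ≤ m)
    (hl : (1 :: l).getLast (by simp) = m) (hn : ∀ p q, ¬ ZP (1 :: l) p q) :
    (m = 1 ∧ l = []) ∨ (1 < m ∧ l = [m]) := by
  rcases l with _ | ⟨b, _ | ⟨c, l⟩⟩
  · left; simpa using hl.symm
  · right
    have := ZZ_ne hz
    have := hb b (by simp)
    simp at hl
    subst hl
    simp; omega
  · exfalso
    have t1 := ZZ_turn hz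
    have b1 := hb b (by simp)
    have b2 := hb c (by simp)
    have := noZP_last l 1 b c hz hn (by unfold InR; omega)
    have e : (1 :: b :: c :: l).getLast (by simp) = (c :: l).getLast (by simp) := by simp
    rw [e] at hl
    omega

theorem ZP_cnt {v p q} (h : ZP v p q) : ∀ x, InR p q x → 1 ≤ cnt x v := by
  induction h with
  | here a p q d l hn =>
    intro x hx
    have e : cnt x (a :: p :: q :: d :: l) = hit x a p + (hit x p q + (hit x q d + cnt x (d :: l))) := rfl
    rw [e]
    unfold hit
    unfold Nest at hn
    unfold InR at hx
    split_ifs <;> omega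
  | there a l p q h ih =>
    intro x hx
    have := ih x hx
    cases l with
    | nil => cases h
    | cons b l => simp only [cnt]; omega

def stp (a b i : ℕ) : ℕ := if a ≤ b then a + i else a - i

def dst (a b : ℕ) : ℕ := (b - a) + (a - b)

def seg (a b : ℕ) : List ℕ := (List.range (dst a b)).map (stp a b)

def path : List ℕ → List ℕ
  | [] => []
  | [a] => [a]
  | a :: b :: l => seg a b ++ path (b :: l)

theorem seg_length (a b : ℕ) : (seg a b).length = dst a b := by simp [seg]

theorem seg_self (a : ℕ) : seg a a = [] := by simp [seg, dst]

theorem seg_append (a b c : ℕ) (h : InR a c b) : seg a c = seg a b ++ seg b c := by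
  have hl : dst a c = dst a b + dst b c := by unfold InR at h; unfold dst; omega
  unfold seg
  rw [hl, List.range_add, List.map_append, List.map_map]
  congr 1
  · apply List.map_congr_left
    intro i hi
    simp at hi
    unfold InR at h; unfold stp; unfold dst at *
    split_ifs <;> omega
  · apply List.map_congr_left
    intro i hi
    simp at hi
    unfold InR at h; simp only [Function.comp]; unfold stp; unfold dst at *
    split_ifs <;> omega

theorem seg_one (a b : ℕ) (h : a = b + 1 ∨ b = a + 1) : seg a b = [a] := by
  have : dst a b = 1 := by unfold dst; omega
  simp [seg, this, stp]

theorem path_head (l : List ℕ) : ∀ a, ∃ t, path (a :: l) = a :: t := by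
  induction l with
  | nil => intro a; exact ⟨[], rfl⟩
  | cons b l ih =>
    intro a
    by_cases h : a = b
    · subst h
      obtain ⟨t, ht⟩ := ih a
      exact ⟨t, by simp [path, seg_self, ht]⟩
    · have : 0 < dst a b := by unfold dst; omega
      obtain ⟨k, hk⟩ := Nat.exists_eq_succ_of_ne_zero this.ne'
      refine ⟨(List.range k).map (fun i => stp a b (i + 1)) ++ path (b :: l), ?_⟩
      simp [path, seg, hk, List.range_succ_eq_map, stp, Function.comp_def]

theorem path_split (a b d : ℕ) (l : List ℕ) (h : InR a d b) :
    path (a :: d :: l) = seg a b ++ path (b :: d :: l) := by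
  simp [path, seg_append a b d h]

theorem path_len (a b : ℕ) (l : List ℕ) :
    (path (a :: b :: l)).length = dst a b + (path (b :: l)).length := by
  simp [path, seg_length]

theorem path_pos (a : ℕ) (l : List ℕ) : 1 ≤ (path (a :: l)).length := by
  obtain ⟨t, ht⟩ := path_head l a
  simp [ht]

theorem at_run (u : List ℕ) (a b : ℕ) (l : List ℕ) (k : ℕ) (h1 : u.length + 1 ≤ k)
    (h2 : k ≤ u.length + 1 + dst a b) :
    seqAt (u ++ path (a :: b :: l)) k = stp a b (k - 1 - u.length) := by
  unfold seqAt
  rw [List.getD_append_right _ _ _ _ (by omega)]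
  simp only [path]
  by_cases h : k - 1 - u.length < dst a b
  · rw [List.getD_append _ _ _ _ (by simpa [seg_length] using h)]
    simp [seg, List.getD_eq_getElem?_getD, h]
  · have e : k - 1 - u.length = dst a b := by omega
    rw [List.getD_append_right _ _ _ _ (by rw [seg_length]; omega), e, seg_length]
    obtain ⟨t, ht⟩ := path_head l b
    simp [ht, stp, dst]
    split_ifs <;> omega

theorem quad_ok (u : List ℕ) (a b c d : ℕ) (l : List ℕ) (h : Nest a b c d) :
    QuadZ (u ++ path (a :: b :: c :: d :: l))
      (u.length + 1 + dst a c, u.length + 1 + dst a b, u.length + 1 + dst a b + dst b c,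
        u.length + 1 + dst a b + 2 * dst b c) := by
  have r1 : ∀ k, u.length + 1 ≤ k → k ≤ u.length + 1 + dst a b →
      seqAt (u ++ path (a :: b :: c :: d :: l)) k = stp a b (k - 1 - u.length) :=
    at_run u a b (c :: d :: l)
  have r2 : ∀ k, u.length + dst a b + 1 ≤ k → k ≤ u.length + dst a b + 1 + dst b c →
      seqAt (u ++ path (a :: b :: c :: d :: l)) k = stp b c (k - 1 - (u.length + dst a b)) := by
    have := at_run (u ++ seg a b) b c (d :: l)
    simpa [seg_length, path] using this
  have r3 : ∀ k, u.length + dst a b + dst b c + 1 ≤ k →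
      k ≤ u.length + dst a b + dst b c + 1 + dst c d →
      seqAt (u ++ path (a :: b :: c :: d :: l)) k =
        stp c d (k - 1 - (u.length + dst a b + dst b c)) := by
    have := at_run (u ++ seg a b ++ seg b c) c d l
    simpa [seg_length, path, Nat.add_assoc] using this
  have hlen : u.length + dst a b + dst b c + dst c d + 1 ≤
      (u ++ path (a :: b :: c :: d :: l)).length := by
    rw [List.length_append, path_len, path_len, path_len]
    have := path_pos d l
    omega
  generalize u ++ path (a :: b :: c :: d :: l) = s at *
  generalize hA : seqAt s = A at *
  generalize hn' : s.length = n at *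
  generalize u.length = w at *
  have d1 : dst a b = dst a c + dst b c ∧ dst b c ≤ dst c d ∧ 0 < dst b c := by
    unfold Nest at h; unfold dst; omega
  have hsame : ∀ k, w + 1 < k → k < w + 1 + dst a b → A (k + 1) ≠ A (k - 1) := by
    intro k k1 k2
    rw [r1 (k+1) (by omega) (by omega), r1 (k-1) (by omega) (by omega)]
    unfold stp; unfold dst at *; split_ifs <;> omega
  have hsame2 : ∀ k, w + 1 + dst a b < k → k < w + 1 + dst a b + dst b c →
      A (k + 1) ≠ A (k - 1) := by
    intro k k1 k2
    rw [r2 (k+1) (by omega) (by omega), r2 (k-1) (by omega) (by omega)]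
    unfold stp; unfold dst at *; split_ifs <;> omega
  have hsame3 : ∀ k, w + 1 + dst a b + dst b c < k →
      k < w + 1 + dst a b + dst b c + dst c d → A (k + 1) ≠ A (k - 1) := by
    intro k k1 k2
    rw [r3 (k+1) (by omega) (by omega), r3 (k-1) (by omega) (by omega)]
    unfold stp; unfold dst at *; split_ifs <;> omega
  unfold QuadZ ZInstance ConsecRev IsReversal
  rw [hA, hn']
  simp only
  refine ⟨⟨⟨by omega, by omega, ?_⟩, ⟨by omega, by omega, ?_⟩, by omega, ?_⟩,
    by omega, by omega, by omega, by omega, ?_, ?_, ?_, ?_⟩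
  · rw [r2 _ (by omega) (by omega), r1 _ (by omega) (by omega)]
    unfold Nest at h; unfold stp; unfold dst at *; split_ifs <;> omega
  · rw [r3 _ (by omega) (by omega), r2 _ (by omega) (by omega)]
    unfold Nest at h; unfold stp; unfold dst at *; split_ifs <;> omega
  · intro k k1 k2 k3
    exact hsame2 k k1 k2 k3.2.2
  · rw [r1 _ (by omega) (by omega), r2 _ (by omega) (by omega)]
    unfold Nest at h; unfold stp; unfold dst at *; split_ifs <;> omega
  · rw [r3 _ (by omega) (by omega), r1 _ (by omega) (by omega)]
    unfold Nest at h; unfold stp; unfold dst at *; split_ifs <;> omega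
  · intro k k1 k2 k3
    exact hsame k (by omega) k2 k3.2.2
  · intro k k1 k2 k3
    exact hsame3 k (by omega) (by omega) k3.2.2

theorem remove_ok (u : List ℕ) (a b c d : ℕ) (l : List ℕ) (h : Nest a b c d)
    (n f : ℕ) (hn : n = u.length + 1 + dst a b) (hf : f = u.length + 1 + dst a b + 2 * dst b c) :
    removeSpan (u ++ path (a :: b :: c :: d :: l)) n f = u ++ path (a :: d :: l) := by
  unfold removeSpan
  obtain ⟨t, ht⟩ := path_head (d :: l) b
  obtain ⟨t', ht'⟩ := path_head (c :: d :: l) b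
  have e1 : path (a :: d :: l) = seg a b ++ b :: t := by
    rw [path_split a b d l (by unfold Nest at h; unfold InR; omega), ht]
  have e2 : path (c :: d :: l) = seg c b ++ b :: t := by
    rw [path_split c b d l (by unfold Nest at h; unfold InR; omega), ht]
  have e3 : u ++ path (a :: b :: c :: d :: l) = (u ++ seg a b ++ [b]) ++ t' := by
    simp [path, ← ht']
  have e4 : u ++ path (a :: b :: c :: d :: l) = (u ++ seg a b ++ seg b c ++ seg c b ++ [b]) ++ t := by
    have : path (a :: b :: c :: d :: l) = seg a b ++ (seg b c ++ path (c :: d :: l)) := rfl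
    rw [this, e2]; simp
  have t1 : List.take n (u ++ path (a :: b :: c :: d :: l)) = u ++ seg a b ++ [b] := by
    rw [e3, List.take_left']
    simp [seg_length]; omega
  have t2 : List.drop f (u ++ path (a :: b :: c :: d :: l)) = t := by
    rw [e4, List.drop_left']
    simp [seg_length]
    have : dst c b = dst b c := by unfold dst; omega
    omega
  rw [t1, t2, e1]; simp

theorem RR_squeeze {a y l o X} (h : RR a y l o X) : ∀ u : List ℕ,
    (∀ z b l', y = some z → l = b :: l' → InR a b z) →
    ∃ L : List (ℕ × ℕ × ℕ × ℕ),
      (∀ q ∈ L, QuadZ (u ++ path (a :: l)) q ∧ u.length + 1 ≤ q.1 ∧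
        ∀ z, y = some z → u.length + 1 + dst a z < q.1) ∧
      L.Pairwise (fun q q' => q'.2.2.2 < q.1) ∧
      L.foldl (fun t q => removeSpan t q.2.1 q.2.2.2) (u ++ path (a :: l)) = u ++ path (a :: o) := by
  induction h with
  | nil a y => intro u _; exact ⟨[], by simp⟩
  | keep a y b l o X h1 h2 ih =>
    intro u hy
    have e1 : u ++ path (a :: b :: l) = (u ++ seg a b) ++ path (b :: l) := by simp [path]
    have e2 : u ++ path (a :: b :: o) = (u ++ seg a b) ++ path (b :: o) := by simp [path]
    obtain ⟨L, hL1, hL2, hL3⟩ := ih (u ++ seg a b) (by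
      intro z c l' hz hl
      split_ifs at hz
      simp at hz
      subst hz; unfold InR; omega)
    refine ⟨L, ?_, hL2, by rw [e1, e2]; exact hL3⟩
    intro q hq
    obtain ⟨g1, g2, g3⟩ := hL1 q hq
    rw [List.length_append, seg_length] at g2 g3
    rw [e1]
    refine ⟨g1, by omega, ?_⟩
    intro z hz
    have hr := hy z b l hz rfl
    by_cases hzb : z = b
    · subst hzb
      have := g3 z (by simp [hz])
      omega
    · have : dst a z < dst a b := by unfold InR at hr; unfold dst; omega
      omega
  | del a y b c d l o X h1 h2 h3 ih =>
    intro u hy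
    have e1 : ∀ l', u ++ path (a :: b :: c :: l') = (u ++ seg a b ++ seg b c) ++ path (c :: l') := by
      intro l'; simp [path]
    obtain ⟨L, hL1, hL2, hL3⟩ := ih (u ++ seg a b ++ seg b c) (by
      intro z e l' hz hl
      simp at hz hl
      unfold InR; unfold Nest at h1; omega)
    obtain ⟨d', o', rfl, h5, h6⟩ := RR_head h3 d l rfl
    refine ⟨L ++ [(u.length + 1 + dst a c, u.length + 1 + dst a b, u.length + 1 + dst a b + dst b c,
        u.length + 1 + dst a b + 2 * dst b c)], ?_, ?_, ?_⟩
    · intro q hq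
      rcases List.mem_append.mp hq with hq | hq
      · obtain ⟨g1, g2, g3⟩ := hL1 q hq
        simp only [List.length_append, seg_length] at g2 g3
        rw [e1]
        refine ⟨g1, by omega, ?_⟩
        intro z hz
        have := hy z b _ hz rfl
        have : dst a z ≤ dst a b := by unfold InR at this; unfold dst; omega
        have := g3 b rfl
        omega
      · simp at hq
        subst hq
        refine ⟨quad_ok u a b c d l h1, by simp only; omega, ?_⟩
        intro z hz
        have g1 := h2 z hz
        have g2 := hy z b _ hz rfl
        simp only
        unfold InR at g2; unfold Nest at h1; unfold dst; omega
    · rw [List.pairwise_append]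
      refine ⟨hL2, by simp, ?_⟩
      intro q hq q' hq'
      simp at hq'
      subst hq'
      have := (hL1 q hq).2.2 b rfl
      simp only [List.length_append, seg_length] at this
      simp only
      have : dst c b = dst b c := by unfold dst; omega
      omega
    · rw [List.foldl_append, e1, hL3, ← e1]
      simp only [List.foldl_cons, List.foldl_nil]
      exact remove_ok u a b c d' o' (by unfold Nest at h1 ⊢; omega) _ _ rfl rfl

theorem RR_step {a l o X} (h : RR a none l o X) : SqueezeStep (path (a :: l)) (path (a :: o)) := by
  obtain ⟨L, h1, h2, h3⟩ := RR_squeeze h [] (by simp)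
  exact ⟨L, fun q hq => (h1 q hq).1, h2, h3.symm⟩

structure SqInv (N m t : ℕ) (l : List ℕ) : Prop where
  zz : ZZ (1 :: l)
  bd : ∀ x ∈ l, 1 ≤ x ∧ x ≤ m
  last : (1 :: l).getLast (by simp) = m
  le : ∀ x, cnt x (1 :: l) ≤ N
  pot : ∀ p q, ZP (1 :: l) p q → ∃ x k j, InR p q x ∧ cnt x (1 :: l) + k ≤ N ∧
    cnt q (1 :: l) + j ≤ N ∧ t ≤ k * N + j

theorem SqInv_step {N m t l} (h : SqInv N m t l) :
    ∃ o, SqueezeStep (path (1 :: l)) (path (1 :: o)) ∧ SqInv N m (t + 1) o := by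
  obtain ⟨o, X, hR⟩ := RR_exists _ l le_rfl 1 none
  refine ⟨o, RR_step hR, RR_ZZ hR h.zz, fun x hx => h.bd x (RR_mem hR x hx),
    (RR_last hR).trans h.last, fun x => (RR_cnt hR x).1.trans (h.le x), ?_⟩
  intro p q hp
  rcases RR_pat hR X (fun _ h => h) h.zz (by simp) p q hp with ⟨u, hu, hu2⟩ | ⟨h1, u, hu, hu2⟩
  · have hz := RR_X hR u hu
    obtain ⟨x, k, j, hx, hk, hj, ht⟩ := h.pot _ _ hz
    have c1 := ZP_cnt hz u.2 (by unfold InR; omega)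
    have c2 := (RR_cnt hR x).2 u hu hx
    refine ⟨x, k + 1, 0, hu2 x hx, by omega, ?_, ?_⟩
    · have := (RR_cnt hR q).1.trans (h.le q)
      omega
    · rw [Nat.add_mul]; omega
  · obtain ⟨x, k, j, hx, hk, hj, ht⟩ := h.pot _ _ h1
    have c1 := (RR_cnt hR x).1
    have c2 := (RR_cnt hR q).2 u hu hu2
    exact ⟨x, k, j + 1, hx, by omega, by omega, by omega⟩

theorem SqInv_iter {N m} (j : ℕ) : ∀ t l, SqInv N m t l →
    ∃ o, SqueezeIter j (path (1 :: l)) (path (1 :: o)) ∧ SqInv N m (t + j) o := by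
  induction j with
  | zero => intro t l h; exact ⟨l, rfl, h⟩
  | succ j ih =>
    intro t l h
    obtain ⟨o, h1, h2⟩ := SqInv_step h
    obtain ⟨o', h3, h4⟩ := ih _ _ h2
    exact ⟨o', ⟨_, h1, h3⟩, by rwa [show t + (j + 1) = t + 1 + j by omega]⟩

theorem SqInv_final {N m l} (h : SqInv N m (N ^ 2) l) : path (1 :: l) = List.range' 1 m := by
  have hn : ∀ p q, ¬ ZP (1 :: l) p q := by
    intro p q hp
    obtain ⟨x, k, j, hx, hk, hj, ht⟩ := h.pot _ _ hp
    have c1 := ZP_cnt hp x hx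
    have c2 := ZP_cnt hp q (by unfold InR; omega)
    have : (k + 1) * N ≤ N * N := Nat.mul_le_mul_right _ (by omega)
    rw [Nat.add_mul] at this
    rw [pow_two] at ht
    omega
  rcases noZP_final m l h.zz h.bd h.last hn with ⟨rfl, rfl⟩ | ⟨hm, rfl⟩
  · rfl
  · obtain ⟨k, rfl⟩ : ∃ k, m = k + 1 := ⟨m - 1, by omega⟩
    have : dst 1 (k + 1) = k := by unfold dst; omega
    have e : List.map (stp 1 (k + 1)) (List.range k) = List.range' 1 k := by
      rw [List.range'_eq_map_range]
      apply List.map_congr_left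
      intro i hi
      unfold stp; split_ifs <;> omega
    rw [List.range'_concat]
    simp only [path, seg, this, e]
    simp; omega

theorem count_seg (x a b : ℕ) : (seg a b).count x = hit x a b := by
  have hnd : (seg a b).Nodup := by
    unfold seg
    apply List.Nodup.map_on _ List.nodup_range
    intro i hi j hj hij
    simp at hi hj
    unfold stp at hij; unfold dst at *
    split_ifs at hij <;> omega
  rw [List.Nodup.count hnd]
  unfold hit
  congr 1
  simp only [eq_iff_iff, seg, List.mem_map, List.mem_range]
  constructor
  · rintro ⟨i, hi, rfl⟩
    unfold stp; unfold dst at hi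
    split_ifs <;> omega
  · intro h
    refine ⟨dst a x, ?_, ?_⟩
    · unfold dst; omega
    · unfold stp dst; split_ifs <;> omega

theorem count_path (x : ℕ) (l : List ℕ) : ∀ a, (path (a :: l)).count x = cnt x (a :: l) := by
  induction l with
  | nil =>
    intro a
    by_cases h : a = x
    · simp [path, cnt, h]
    · simp [path, cnt, h, Ne.symm h]
  | cons b l ih =>
    intro a
    simp only [path, cnt, List.count_append, count_seg, ih]

theorem count_le_card (x : ℕ) (s : List ℕ) :
    s.count x = ((Finset.Icc 1 s.length).filter fun i => seqAt s i = x).card := by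
  induction s using List.reverseRecOn with
  | nil => simp
  | append_singleton s b ih =>
    rw [List.count_append, ih, List.length_append, List.length_singleton,
      ← Finset.insert_Icc_right_eq_Icc_add_one (by omega), Finset.filter_insert]
    have e : (Finset.Icc 1 s.length).filter (fun i => seqAt (s ++ [b]) i = x) =
        (Finset.Icc 1 s.length).filter (fun i => seqAt s i = x) := by
      apply Finset.filter_congr
      intro i hi
      simp at hi
      unfold seqAt
      rw [List.getD_append _ _ _ _ (by omega)]
    have e2 : seqAt (s ++ [b]) (s.length + 1) = b := by simp [seqAt]
    rw [e2, e]
    by_cases h : b = x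
    · subst h
      simp
    · simp [h]

def Chain1 : List ℕ → Prop
  | [] => True
  | [_] => True
  | a :: b :: l => (b = a + 1 ∨ a = b + 1) ∧ Chain1 (b :: l)

theorem exists_zz (s : List ℕ) : ∀ a, Chain1 (a :: s) → ∃ l, ZZ (a :: l) ∧ path (a :: l) = a :: s ∧
    (∀ x ∈ l, x ∈ s) ∧ (a :: l).getLast (by simp) = (a :: s).getLast (by simp) := by
  induction s with
  | nil => intro a _; exact ⟨[], ZZ.one a, rfl, by simp, rfl⟩
  | cons y s ih =>
    intro a hc
    obtain ⟨hay, hc⟩ := hc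
    obtain ⟨l, h1, h2, h3, h4⟩ := ih y hc
    have ne : path (a :: y :: l) = a :: y :: s := by
      simp [path, h2, seg_one a y (by omega)]
    have key : ZZ (a :: y :: l) → _ := fun h => (⟨y :: l, h, ne, by
      intro x hx
      rcases List.mem_cons.mp hx with rfl | hx
      · simp
      · simp [h3 x hx], by simpa using h4⟩ : ∃ l, ZZ (a :: l) ∧ path (a :: l) = a :: y :: s ∧
        (∀ x ∈ l, x ∈ y :: s) ∧ (a :: l).getLast (by simp) = (a :: y :: s).getLast (by simp))
    rcases l with _ | ⟨b, l⟩
    · exact key (ZZ.two _ _ (by omega))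
    · have hyb := ZZ_ne h1
      by_cases ht : (a < y ∧ b < y) ∨ (y < a ∧ y < b)
      · exact key (ZZ.cons _ _ _ _ ht h1)
      · refine ⟨b :: l, ?_, ?_, ?_, ?_⟩
        · cases h1 with
          | two _ _ h => apply ZZ.two; omega
          | cons _ _ c l h7 h8 => exact ZZ.cons _ _ _ _ (by omega) h8
        · rw [path_split a y b l (by unfold InR; omega), ← ne]; rfl
        · intro x hx; simp [h3 x hx]
        · simpa using h4

theorem chain1_of (s : List ℕ) (h : ∀ i, 1 ≤ i → i < s.length →
    seqAt s (i + 1) = seqAt s i + 1 ∨ seqAt s i = seqAt s (i + 1) + 1) : Chain1 s := by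
  induction s with
  | nil => trivial
  | cons a s ih =>
    rcases s with _ | ⟨b, s⟩
    · trivial
    · refine ⟨?_, ih ?_⟩
      · have := h 1 le_rfl (by simp)
        simpa [seqAt] using this
      · intro i h1 h2
        have := h (i + 1) (by omega) (by simp at h2 ⊢; omega)
        obtain ⟨j, rfl⟩ : ∃ j, i = j + 1 := ⟨i - 1, by omega⟩
        simpa [seqAt] using this

/-- Lemma (removal): every `N`-crossing one-step sequence over `{1,…,m}` can be
reduced to the strictly increasing sequence `1, 2, …, m` by `N²` applications of
the squeeze operation. -/
theorem stmt9 (s : List ℕ) (m N : ℕ)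
    (h1 : OneStep (seqAt s) s.length m)
    (hN : KCrossing (seqAt s) s.length N) :
    ∃ s', SqueezeIter (N ^ 2) s s' ∧ s' = List.range' 1 m := by
  obtain ⟨hn, ha, hm, hb, hs⟩ := h1
  have hc := chain1_of s hs
  rcases s with _ | ⟨a, s⟩
  · simp at hn
  have ha' : a = 1 := by simpa [seqAt] using ha
  subst ha'
  obtain ⟨l, z1, z2, z3, z4⟩ := exists_zz s 1 hc
  have hinv : SqInv N m 0 l := by
    have hle : ∀ x, cnt x (1 :: l) ≤ N := by
      intro x
      rw [← count_path, z2, count_le_card]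
      exact hN x
    refine ⟨z1, ?_, ?_, hle, ?_⟩
    · intro x hx
      obtain ⟨i, hi, rfl⟩ := List.mem_iff_getElem.mp (z3 x hx)
      have := hb (i + 2) (by omega) (by simp; omega)
      simpa [seqAt, List.getD_eq_getElem?_getD, hi] using this
    · rw [z4, ← hm, List.getLast_eq_getElem]
      simp [seqAt, List.getD_eq_getElem?_getD]
    · intro p q hp
      exact ⟨q, 0, 0, by unfold InR; omega, hle q, hle q, by omega⟩
  obtain ⟨o, h3, h4⟩ := SqInv_iter (N ^ 2) 0 l hinv
  rw [Nat.zero_add] at h4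
  rw [z2] at h3
  exact ⟨_, h3, SqInv_final h4⟩
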